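/- arXiv:2304.11232 — 2 statements merged into one kernel-verified Lean document; each statement's English description precedes it below -/
import Mathlib

section
/- Let G be a contracting self-similar group. The limit space of G is zero-dimensional if and only if the subgroup of G generated by the nucleus is finite. In particular (assuming G is generated by its nucleus together with finitary elements contributing finite local data), this is further equivalent to G being locally finite. -/
/-!
Write `H` for the subgroup generated by the nucleus `N` and `∼` for asymptotic equivalence on
`X^{-ω}`.

If `H` is finite, then `N` may be replaced by `H` in the definition of `∼`, because sections of
elements of `H` at long words lie in `N` uniformly (`asymp_of_finite`). So the `∼`-class of `x` is
the intersection of the decreasing sequence of clopen saturated sets of sequences whose word of length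
`n` lies in the `H`-orbit of `x_n…x_1` (`OrbitCell`). By compactness, one of them lies over a member of a
given open cover; the largest such sets form a disjoint open refinement (`covDim_of_finite`).

Conversely, suppose the limit space has dimension zero. The relation `Germ g x y` refines `x ∼ y` by
recording the section `g ∈ N`; it is closed under composition, with multiplication of the
sections (`germ_comp`). Every `∼`-class is finite (`finite_class`), so on the class of `x` these
relations are detected at a finite level `k x` (`exists_level`). Cover the limit space by
neighbourhoods of the points `[x]` all of whose representatives agree up to level `k x` with
elements of the class of `x`, and take a disjoint open refinement. By compactness there is a level
`n` at which words determine the piece of the refinement. Applying a generator `s ∈ N` to a word of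
length `n` does not change the piece, since `w` and `s w` extend to asymptotically equivalent
sequences. Hence the whole `H`-orbit of a word `v` stays close to one class, along which the
sections compose as germs; in particular the section at `v` of every element of `H` lies in `N`
(`finite_of_covDim`). An element being determined by its action on `X^n` and its sections there, `H`
is finite (`finite_of_sec_mem`).

The latter embedding also shows that finiteness of `H` implies local finiteness of `G`: the sections
of a finitely generated subgroup at a deep enough level lie in `H` (`locally_finite`).
-/


open Set

/-- The (Lebesgue) covering dimension of `Y` is at most `d`. -/
def CovDimLE (Y : Type*) [TopologicalSpace Y] (d : ℕ) : Prop :=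
  ∀ 𝒰 : Set (Set Y), (∀ U ∈ 𝒰, IsOpen U) → ⋃₀ 𝒰 = univ →
    ∃ 𝒱 : Set (Set Y), (∀ V ∈ 𝒱, IsOpen V) ∧ ⋃₀ 𝒱 = univ ∧
      (∀ V ∈ 𝒱, ∃ U ∈ 𝒰, V ⊆ U) ∧
      ∀ y : Y, {V | V ∈ 𝒱 ∧ y ∈ V}.Finite ∧ {V | V ∈ 𝒱 ∧ y ∈ V}.ncard ≤ d + 1

/-- The word `x_n … x_2 x_1` (of length `n`) read off a left-infinite sequence
`… x_2 x_1`, coded as `x : ℕ → X` with `x 0 = x_1`. -/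
def wordOf {X : Type*} (x : ℕ → X) (n : ℕ) : List X := (List.range n).reverse.map x

/-! ### Words read off left-infinite sequences -/

section Words

variable {X : Type*}

lemma length_wordOf (x : ℕ → X) (n : ℕ) : (wordOf x n).length = n := by simp [wordOf]

lemma wordOf_succ (x : ℕ → X) (n : ℕ) : wordOf x (n + 1) = x n :: wordOf x n := by
  simp [wordOf, List.range_succ]

lemma wordOf_add (x : ℕ → X) (n m : ℕ) :
    ∃ p : List X, p.length = m ∧ wordOf x (n + m) = p ++ wordOf x n := by
  induction m with
  | zero => exact ⟨[], rfl, rfl⟩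
  | succ m ih =>
    obtain ⟨p, hp, h⟩ := ih
    exact ⟨x (n + m) :: p, by simp [hp], by rw [← add_assoc, wordOf_succ, h]; rfl⟩

lemma wordOf_eq_of_le {x y : ℕ → X} {n k : ℕ} (hk : k ≤ n) (h : wordOf x n = wordOf y n) :
    wordOf x k = wordOf y k := by
  obtain ⟨m, rfl⟩ := Nat.exists_eq_add_of_le hk
  obtain ⟨p, hp, h1⟩ := wordOf_add x k m
  obtain ⟨q, hq, h2⟩ := wordOf_add y k m
  rw [h1, h2] at h
  exact (List.append_inj h (hp.trans hq.symm)).2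

lemma eq_of_wordOf_eq {x y : ℕ → X} (h : ∀ n, wordOf x n = wordOf y n) : x = y := by
  funext n
  have := h (n + 1)
  rw [wordOf_succ, wordOf_succ] at this
  exact (List.cons.inj this).1

/-- Every finite word can be continued to the left by a prescribed sequence of letters. -/
lemma exists_extension (w : List X) (a : ℕ → X) :
    ∃ y : ℕ → X, wordOf y w.length = w ∧ ∀ i, y (w.length + i) = a i := by
  induction w generalizing a with
  | nil => exact ⟨a, rfl, by simp⟩
  | cons b w ih =>
    obtain ⟨y, hy, hya⟩ := ih (fun i => Nat.casesOn i b a)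
    refine ⟨y, ?_, fun i => ?_⟩
    · have := hya 0
      rw [List.length_cons, wordOf_succ, hy]
      simpa using this
    · have := hya (i + 1)
      rw [List.length_cons, add_assoc, add_comm 1 i]
      exact this

lemma isLocallyConstant_wordOf [TopologicalSpace X] [DiscreteTopology X] (n : ℕ) :
    IsLocallyConstant (fun x : ℕ → X => wordOf x n) := by
  induction n with
  | zero => exact IsLocallyConstant.const []
  | succ n ih =>
    have h1 : IsLocallyConstant (fun x : ℕ → X => x n) :=
      (IsLocallyConstant.iff_continuous _).2 (continuous_apply n)
    have := h1.comp₂ ih (fun a l => a :: l)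
    simpa only [wordOf_succ] using this

lemma isOpen_wordOf [TopologicalSpace X] [DiscreteTopology X] (n : ℕ) (P : List X → Prop) :
    IsOpen {x : ℕ → X | P (wordOf x n)} :=
  isLocallyConstant_wordOf n {w | P w}

lemma isClosed_wordOf [TopologicalSpace X] [DiscreteTopology X] (n : ℕ) (P : List X → Prop) :
    IsClosed {x : ℕ → X | P (wordOf x n)} :=
  ⟨isOpen_wordOf n (fun w => ¬ P w)⟩

/-- Every neighbourhood of a sequence contains a cylinder around it. -/
lemma exists_cylinder_subset [TopologicalSpace X] [DiscreteTopology X] [Finite X]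
    {U : Set (ℕ → X)} (hU : IsOpen U) {x : ℕ → X} (hx : x ∈ U) :
    ∃ n, ∀ y, wordOf y n = wordOf x n → y ∈ U := by
  refine exists_subset_nhds_of_isCompact (V := fun n => {y | wordOf y n = wordOf x n}) ?_
    (fun n => (isClosed_wordOf n (fun w => w = wordOf x n)).isCompact) (U := U) ?_
  · refine directed_of_isDirected_le fun n m hnm y hy => ?_
    exact wordOf_eq_of_le hnm hy
  · intro y hy
    rw [eq_of_wordOf_eq fun n => (mem_iInter.1 hy n : wordOf y n = wordOf x n)]
    exact hU.mem_nhds hx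

end Words

/-! ### Contracting self-similar groups and their nuclei -/

/-- The standing assumptions: `act` is a faithful length-preserving action of `G` on words,
`sec g v` is the section of `g` at `v`, and `N` is the nucleus. -/
structure IsContracting {G X : Type*} [Group G] (act : G → List X → List X)
    (sec : G → List X → G) (N : Finset G) : Prop where
  one : ∀ v, act 1 v = v
  mul : ∀ g h : G, ∀ v, act (g * h) v = act g (act h v)
  faithful : ∀ g : G, (∀ v, act g v = v) → g = 1
  len : ∀ g v, (act g v).length = v.length
  app : ∀ g v w, act g (v ++ w) = act g v ++ act (sec g v) w
  contr : ∀ g : G, ∃ n : ℕ, ∀ v : List X, n ≤ v.length → sec g v ∈ N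
  min : ∀ N' : Finset G,
    (∀ g : G, ∃ n : ℕ, ∀ v : List X, n ≤ v.length → sec g v ∈ N') → N ⊆ N'

namespace IsContracting

variable {G X : Type*} [Group G] {act : G → List X → List X} {sec : G → List X → G}
  {N : Finset G}

lemma act_nil (h : IsContracting act sec N) (g : G) : act g [] = [] :=
  List.eq_nil_of_length_eq_zero (h.len g [])

lemma ext (h : IsContracting act sec N) {g k : G} (hgk : ∀ v, act g v = act k v) : g = k := by
  have : k⁻¹ * g = 1 := h.faithful _ fun v => by
    rw [h.mul, hgk, ← h.mul, inv_mul_cancel, h.one]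
  exact (inv_mul_eq_one.1 this).symm

lemma sec_nil (h : IsContracting act sec N) (g : G) : sec g [] = g :=
  h.ext fun v => by
    have := h.app g [] v
    rw [h.act_nil] at this
    simpa using this.symm

lemma sec_append (h : IsContracting act sec N) (g : G) (v w : List X) :
    sec g (v ++ w) = sec (sec g v) w :=
  h.ext fun u => by
    have h1 := h.app g (v ++ w) u
    rw [h.app g v w, List.append_assoc, h.app g v (w ++ u), h.app (sec g v) w u] at h1
    simp only [List.append_assoc, List.append_cancel_left_eq] at h1
    exact h1.symm

lemma sec_mul (h : IsContracting act sec N) (g k : G) (v : List X) :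
    sec (g * k) v = sec g (act k v) * sec k v :=
  h.ext fun u => by
    have h1 := h.app (g * k) v u
    rw [h.mul, h.mul, h.app k, h.app g, List.append_cancel_left_eq] at h1
    rw [h.mul]
    exact h1.symm

lemma sec_one (h : IsContracting act sec N) (v : List X) : sec 1 v = 1 :=
  h.ext fun u => by
    have h1 := h.app 1 v u
    simp only [h.one, List.append_cancel_left_eq] at h1
    rw [h.one]
    exact h1.symm

lemma act_inv_act (h : IsContracting act sec N) (g : G) (v : List X) :
    act g⁻¹ (act g v) = v := by
  rw [← h.mul, inv_mul_cancel, h.one]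

lemma sec_inv (h : IsContracting act sec N) (g : G) (v : List X) :
    sec g⁻¹ v = (sec g (act g⁻¹ v))⁻¹ := by
  have h1 := h.sec_mul g g⁻¹ v
  rw [mul_inv_cancel, h.sec_one] at h1
  exact (inv_eq_of_mul_eq_one_right h1.symm).symm

/-- A finite set of group elements is contracted into the nucleus uniformly. -/
lemma exists_uniform (h : IsContracting act sec N) {F : Set G} (hF : F.Finite) :
    ∃ m, ∀ g ∈ F, ∀ v, m ≤ v.length → sec g v ∈ N := by
  have : ∀ᶠ m in Filter.atTop, ∀ g ∈ F, ∀ v, m ≤ v.length → sec g v ∈ N := by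
    rw [Filter.eventually_all_finite hF]
    intro g _
    obtain ⟨n, hn⟩ := h.contr g
    filter_upwards [Filter.eventually_ge_atTop n] with m hm v hv
    exact hn v (hm.trans hv)
  exact this.exists

/-- By minimality, each element of the nucleus occurs as a section of a single group element at
arbitrarily long words: the elements of `N` with this property already form a contracting set. -/
lemma recurrent (h : IsContracting act sec N) {s : G} (hs : s ∈ N) :
    ∃ k, ∀ n, ∃ v : List X, n ≤ v.length ∧ sec k v = s := by
  classical
  have key : N ⊆ N.filter (fun g => ∃ k, ∀ n, ∃ v : List X, n ≤ v.length ∧ sec k v = g) := by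
    refine h.min _ fun k => ?_
    have : ∀ᶠ m in Filter.atTop, ∀ g ∈ N, ∀ v : List X, m ≤ v.length → sec k v = g →
        ∃ k, ∀ n, ∃ v : List X, n ≤ v.length ∧ sec k v = g := by
      rw [Filter.eventually_all_finset]
      intro g _
      by_cases hg : ∃ k, ∀ n, ∃ v : List X, n ≤ v.length ∧ sec k v = g
      · exact Filter.Eventually.of_forall fun _ _ _ _ => hg
      · push Not at hg
        obtain ⟨n, hn⟩ := hg k
        filter_upwards [Filter.eventually_ge_atTop n] with m hm v hv hvg
        exact absurd hvg (hn v (hm.trans hv))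
    obtain ⟨n, hn⟩ := h.contr k
    obtain ⟨m, hm, hnm⟩ := (this.and (Filter.eventually_ge_atTop n)).exists
    refine ⟨m, fun v hv => ?_⟩
    have hv' := hn v (hnm.trans hv)
    exact Finset.mem_filter.2 ⟨hv', hm _ hv' v hv rfl⟩
  exact (Finset.mem_filter.1 (key hs)).2

lemma sec_mem (h : IsContracting act sec N) {s : G} (hs : s ∈ N) (v : List X) :
    sec s v ∈ N := by
  obtain ⟨k, hk⟩ := h.recurrent hs
  obtain ⟨m, hm⟩ := h.contr k
  obtain ⟨u, hu, rfl⟩ := hk m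
  rw [← h.sec_append]
  exact hm _ (by rw [List.length_append]; omega)

/-- Each element of the nucleus is a one-letter section of another element of the nucleus. -/
lemma exists_section (h : IsContracting act sec N) {s : G} (hs : s ∈ N) :
    ∃ t ∈ N, ∃ a, sec t [a] = s := by
  obtain ⟨k, hk⟩ := h.recurrent hs
  obtain ⟨m, hm⟩ := h.contr k
  obtain ⟨v, hv, hkv⟩ := hk (m + 1)
  have hne : v ≠ [] := by rintro rfl; simp at hv
  rw [← List.dropLast_append_getLast hne, h.sec_append] at hkv
  exact ⟨_, hm v.dropLast (by rw [List.length_dropLast]; omega), _, hkv⟩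

lemma one_mem (h : IsContracting act sec N) [Nonempty X] : (1 : G) ∈ N := by
  obtain ⟨n, hn⟩ := h.contr 1
  have := hn (List.replicate n (Classical.arbitrary X)) (by simp)
  rwa [h.sec_one] at this

lemma inv_mem (h : IsContracting act sec N) {s : G} (hs : s ∈ N) : s⁻¹ ∈ N := by
  obtain ⟨k, hk⟩ := h.recurrent hs
  obtain ⟨m, hm⟩ := h.contr k⁻¹
  obtain ⟨u, hu, rfl⟩ := hk m
  have := hm (act k u) (by rwa [h.len])
  rwa [h.sec_inv, h.act_inv_act] at this

lemma sec_mem_closure (h : IsContracting act sec N) {S : Set G} {K : Subgroup G} {n : ℕ}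
    (hS : ∀ s ∈ S, ∀ v, n ≤ v.length → sec s v ∈ K) {g : G} (hg : g ∈ Subgroup.closure S) :
    ∀ v, n ≤ v.length → sec g v ∈ K := by
  induction hg using Subgroup.closure_induction with
  | mem x hx => exact hS x hx
  | one => intro v _; rw [h.sec_one]; exact K.one_mem
  | mul x y _ _ hx hy =>
    intro v hv
    rw [h.sec_mul]
    exact K.mul_mem (hx _ (by rwa [h.len])) (hy v hv)
  | inv x _ hx =>
    intro v hv
    rw [h.sec_inv]
    exact K.inv_mem (hx _ (by rwa [h.len]))

lemma sec_mem_closure_nucleus (h : IsContracting act sec N) {g : G}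
    (hg : g ∈ Subgroup.closure (N : Set G)) (v : List X) :
    sec g v ∈ Subgroup.closure (N : Set G) :=
  h.sec_mem_closure (n := 0)
    (fun _ hs v _ => Subgroup.subset_closure (h.sec_mem hs v)) hg v (Nat.zero_le _)

/-- A group element is determined by its action on the words of length `n` and its sections at
these words, so finitely many possible sections leave finitely many possible elements. -/
lemma finite_of_sec_mem [Finite X] (h : IsContracting act sec N) (K : Set G) (F : Set G)
    (hF : F.Finite) (n : ℕ) (hK : ∀ g ∈ K, ∀ v, v.length = n → sec g v ∈ F) : Finite K := by
  have := hF.to_subtype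
  have := (List.finite_length_eq X n).to_subtype
  let W := {l : List X | l.length = n}
  let Φ : K → (W → W × F) := fun g v =>
    (⟨act g v, (h.len _ _).trans v.2⟩, ⟨sec g v, hK g g.2 v v.2⟩)
  refine Finite.of_injective Φ fun g k hgk => Subtype.ext (h.ext ?_)
  have hact : ∀ v : List X, v.length = n → act g v = act k v := fun v hv =>
    congrArg (fun p : W × F => (p.1 : List X)) (congrFun hgk ⟨v, hv⟩)
  have hsec : ∀ v : List X, v.length = n → sec g v = sec k v := fun v hv =>
    congrArg (fun p : W × F => (p.2 : G)) (congrFun hgk ⟨v, hv⟩)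
  have hlong : ∀ v : List X, n ≤ v.length → act g v = act k v := fun v hv => by
    have hlen : (v.take n).length = n := by simp [hv]
    rw [← List.take_append_drop n v, h.app, h.app, hact _ hlen, hsec _ hlen]
  intro v
  cases v with
  | nil => rw [h.act_nil, h.act_nil]
  | cons a v =>
    -- short words are padded on the right to length at least `n`
    have h1 := hlong ((a :: v) ++ List.replicate n a) (by simp; omega)
    rw [h.app, h.app] at h1
    exact (List.append_inj h1 (by rw [h.len, h.len])).1

/-- If the nucleus generates a finite group, then every finitely generated subgroup is finite. -/
lemma locally_finite [Finite X] (h : IsContracting act sec N)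
    (hfin : Finite (Subgroup.closure (N : Set G))) (S : Finset G) :
    Finite (Subgroup.closure (S : Set G)) := by
  obtain ⟨m, hm⟩ := h.exists_uniform S.finite_toSet
  refine h.finite_of_sec_mem (Subgroup.closure (S : Set G) : Set G)
    (Subgroup.closure (N : Set G) : Set G) (Set.toFinite _) m fun g hg v hv => ?_
  exact h.sec_mem_closure (fun s hs v hv => Subgroup.subset_closure (hm s hs v hv)) hg v hv.ge

/-! ### Asymptotic equivalence -/

/-- Discarding `m` letters on the left replaces an element mapping `x_{n+m}…x_1` to
`y_{n+m}…y_1` by its section at the discarded letters. -/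
lemma shift (h : IsContracting act sec N) {x y : ℕ → X} {f : G} {n m : ℕ}
    (hf : act f (wordOf x (n + m)) = wordOf y (n + m)) :
    ∃ p : List X, p.length = m ∧ act (sec f p) (wordOf x n) = wordOf y n ∧
      sec (sec f p) (wordOf x n) = sec f (wordOf x (n + m)) := by
  obtain ⟨p, hp, h1⟩ := wordOf_add x n m
  obtain ⟨q, hq, h2⟩ := wordOf_add y n m
  refine ⟨p, hp, ?_, by rw [h1, h.sec_append]⟩
  rw [h1, h2, h.app] at hf
  exact (List.append_inj hf (by rw [h.len, hp, hq])).2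

end IsContracting

/-- Asymptotic equivalence of left-infinite sequences. -/
def Asymp {G X : Type*} (act : G → List X → List X) (N : Finset G) (x y : ℕ → X) : Prop :=
  ∃ g : ℕ → G, (∀ n, g n ∈ N) ∧ ∀ n, act (g n) (wordOf x n) = wordOf y n

lemma asymp_iff {G X : Type*} {act : G → List X → List X} {N : Finset G} {x y : ℕ → X} :
    Asymp act N x y ↔ ∀ n, ∃ g ∈ N, act g (wordOf x n) = wordOf y n := by
  constructor
  · rintro ⟨g, hg, h⟩ n
    exact ⟨g n, hg n, h n⟩
  · intro h
    choose g hg h using h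
    exact ⟨g, hg, h⟩

/-- Asymptotic equivalence classes are finite, with at most `|N|` elements: sequences in the class
of `x` are told apart by words of some length `n`, and these are images of one word under `N`. -/
lemma finite_class {G X : Type*} {act : G → List X → List X} {N : Finset G}
    (x : ℕ → X) : {z | Asymp act N x z}.Finite := by
  classical
  by_contra hinf
  obtain ⟨T, hT, hcard⟩ := Set.Infinite.exists_subset_card_eq hinf (N.card + 1)
  have hsep : ∀ᶠ n in Filter.atTop, ∀ z ∈ T, ∀ z' ∈ T, wordOf z n = wordOf z' n → z = z' := by
    rw [Filter.eventually_all_finset]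
    intro z _
    rw [Filter.eventually_all_finset]
    intro z' _
    by_cases hz : z = z'
    · exact Filter.Eventually.of_forall fun _ _ => hz
    · obtain ⟨k, hk⟩ : ∃ k, wordOf z k ≠ wordOf z' k := by
        by_contra! hcon
        exact hz (eq_of_wordOf_eq hcon)
      filter_upwards [Filter.eventually_ge_atTop k] with n hn heq
      exact absurd (wordOf_eq_of_le hn heq) hk
  obtain ⟨n, hn⟩ := hsep.exists
  have h1 : (T.image fun z => wordOf z n) ⊆ N.image fun g => act g (wordOf x n) := by
    intro w hw
    obtain ⟨z, hz, rfl⟩ := Finset.mem_image.1 hw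
    obtain ⟨g, hg, hgx⟩ := asymp_iff.1 (hT hz) n
    exact Finset.mem_image.2 ⟨g, hg, hgx⟩
  have h2 := (Finset.card_le_card h1).trans Finset.card_image_le
  rw [Finset.card_image_of_injOn fun z hz z' hz' => hn z hz z' hz', hcard] at h2
  omega

lemma isClosed_asymp {G X : Type*} {act : G → List X → List X} {N : Finset G}
    [TopologicalSpace X] [DiscreteTopology X] :
    IsClosed {p : (ℕ → X) × (ℕ → X) | Asymp act N p.1 p.2} := by
  have : {p : (ℕ → X) × (ℕ → X) | Asymp act N p.1 p.2} =
      ⋂ n, {p | ∃ g ∈ N, act g (wordOf p.1 n) = wordOf p.2 n} := by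
    ext p; simp only [Set.mem_ofPred_eq, asymp_iff, Set.mem_iInter]
  rw [this]
  refine isClosed_iInter fun n => ⟨?_⟩
  have h1 : IsLocallyConstant (fun p : (ℕ → X) × (ℕ → X) => wordOf p.1 n) :=
    (isLocallyConstant_wordOf n).comp_continuous continuous_fst
  have h2 : IsLocallyConstant (fun p : (ℕ → X) × (ℕ → X) => wordOf p.2 n) :=
    (isLocallyConstant_wordOf n).comp_continuous continuous_snd
  exact h1.comp₂ h2 (fun v w => (v, w)) {q | ¬ ∃ g ∈ N, act g q.1 = q.2}

/-- Level-`n` approximation of `Germ`: some element of the nucleus maps `v` to `w` with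
section `g` at `v`. -/
def GermAt {G X : Type*} (act : G → List X → List X) (sec : G → List X → G) (N : Finset G)
    (g : G) (v w : List X) : Prop :=
  ∃ f ∈ N, act f v = w ∧ sec f v = g

/-- The sequences `x` and `y` are asymptotically equivalent through elements of the nucleus which
all have section `g` at the words read off `x`; equivalently, `(x, 1)` and `(y, g)` represent the
same point of the limit `G`-space `(X^{-ω} × G)/∼`. -/
def Germ {G X : Type*} (act : G → List X → List X) (sec : G → List X → G) (N : Finset G)
    (g : G) (x y : ℕ → X) : Prop :=
  ∀ n, GermAt act sec N g (wordOf x n) (wordOf y n)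

namespace IsContracting

variable {G X : Type*} [Group G] {act : G → List X → List X} {sec : G → List X → G}
  {N : Finset G}

/-- Any finite set of elements may be used in place of the nucleus to witness asymptotic
equivalence: sections at long prefixes land in the nucleus. -/
lemma asymp_of_finite (h : IsContracting act sec N) {F : Set G} (hF : F.Finite) {x y : ℕ → X}
    (hxy : ∀ n, ∃ f ∈ F, act f (wordOf x n) = wordOf y n) : Asymp act N x y := by
  obtain ⟨m, hm⟩ := h.exists_uniform hF
  refine asymp_iff.2 fun n => ?_
  obtain ⟨f, hf, hfx⟩ := hxy (n + m)
  obtain ⟨p, hp, h1, -⟩ := h.shift hfx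
  exact ⟨_, hm f hf p hp.ge, h1⟩

lemma finite_mul_nucleus (N : Finset G) : {f : G | ∃ a ∈ N, ∃ b ∈ N, a * b = f}.Finite := by
  have := (N.finite_toSet.prod N.finite_toSet).image (fun p : G × G => p.1 * p.2)
  refine this.subset ?_
  rintro _ ⟨a, ha, b, hb, rfl⟩
  exact ⟨(a, b), ⟨ha, hb⟩, rfl⟩

lemma equivalence_asymp (h : IsContracting act sec N) : Equivalence (Asymp act N) where
  refl x := by
    have : Nonempty X := ⟨x 0⟩
    exact asymp_iff.2 fun n => ⟨1, h.one_mem, h.one _⟩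
  symm {x y} hxy := by
    refine asymp_iff.2 fun n => ?_
    obtain ⟨g, hg, hgx⟩ := asymp_iff.1 hxy n
    exact ⟨g⁻¹, h.inv_mem hg, by rw [← hgx, h.act_inv_act]⟩
  trans {x y z} hxy hyz := by
    refine h.asymp_of_finite (finite_mul_nucleus N) fun n => ?_
    obtain ⟨g, hg, hgx⟩ := asymp_iff.1 hxy n
    obtain ⟨k, hk, hky⟩ := asymp_iff.1 hyz n
    exact ⟨_, ⟨k, hk, g, hg, rfl⟩, by rw [h.mul, hgx, hky]⟩

lemma mk_eq_mk (h : IsContracting act sec N) {x y : ℕ → X} :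
    Quot.mk (Asymp act N) x = Quot.mk (Asymp act N) y ↔ Asymp act N x y :=
  h.equivalence_asymp.quot_mk_eq_iff x y

lemma GermAt.mono (h : IsContracting act sec N) {g : G} {x y : ℕ → X} {n k : ℕ} (hk : k ≤ n)
    (hxy : GermAt act sec N g (wordOf x n) (wordOf y n)) :
    GermAt act sec N g (wordOf x k) (wordOf y k) := by
  obtain ⟨m, rfl⟩ := Nat.exists_eq_add_of_le hk
  obtain ⟨f, hf, hfx, rfl⟩ := hxy
  obtain ⟨p, -, h1, h2⟩ := h.shift hfx
  exact ⟨_, h.sec_mem hf p, h1, h2⟩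

lemma GermAt.mem (h : IsContracting act sec N) {g : G} {v w : List X}
    (hg : GermAt act sec N g v w) : g ∈ N := by
  obtain ⟨f, hf, -, rfl⟩ := hg
  exact h.sec_mem hf v

lemma germ_one (h : IsContracting act sec N) (x : ℕ → X) : Germ act sec N 1 x x := fun n => by
  have : Nonempty X := ⟨x 0⟩
  exact ⟨1, h.one_mem, h.one _, h.sec_one _⟩

lemma germ_comp (h : IsContracting act sec N) {g k : G} {x y z : ℕ → X}
    (hxy : Germ act sec N k x y) (hyz : Germ act sec N g y z) :
    Germ act sec N (g * k) x z := by
  obtain ⟨m, hm⟩ := h.exists_uniform (finite_mul_nucleus N)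
  intro n
  obtain ⟨b, hb, hbx, rfl⟩ := hxy (n + m)
  obtain ⟨a, ha, hay, rfl⟩ := hyz (n + m)
  obtain ⟨p, hp, h1, h2⟩ := h.shift (f := a * b) (x := x) (y := z) (n := n) (m := m)
    (by rw [h.mul, hbx, hay])
  refine ⟨_, hm _ ⟨a, ha, b, hb, rfl⟩ p hp.ge, h1, ?_⟩
  rw [h2, h.sec_mul, hbx]

lemma Germ.mem (h : IsContracting act sec N) {g : G} {x y : ℕ → X}
    (hg : Germ act sec N g x y) : g ∈ N := GermAt.mem h (hg 0)

/-- On a single asymptotic equivalence class, the relations `Germ` are detected at some finite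
level. -/
lemma exists_level (h : IsContracting act sec N) (x : ℕ → X) :
    ∃ k, ∀ z z' g, Asymp act N x z → Asymp act N x z' →
      GermAt act sec N g (wordOf z k) (wordOf z' k) → Germ act sec N g z z' := by
  have hfin := finite_class (act := act) (N := N) x
  have : ∀ᶠ k in Filter.atTop, ∀ z ∈ {z | Asymp act N x z}, ∀ z' ∈ {z | Asymp act N x z},
      ∀ g ∈ N, GermAt act sec N g (wordOf z k) (wordOf z' k) → Germ act sec N g z z' := by
    rw [Filter.eventually_all_finite hfin]
    intro z _
    rw [Filter.eventually_all_finite hfin]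
    intro z' _
    rw [Filter.eventually_all_finset]
    intro g _
    by_cases hg : Germ act sec N g z z'
    · exact Filter.Eventually.of_forall fun _ _ => hg
    · obtain ⟨k, hk⟩ := not_forall.1 hg
      filter_upwards [Filter.eventually_ge_atTop k] with n hn hgn
      exact absurd (GermAt.mono h hn hgn) hk
  obtain ⟨k, hk⟩ := this.exists
  exact ⟨k, fun z z' g hz hz' hg => hk z hz z' hz' g (GermAt.mem h hg) hg⟩

/-- If an element of the nucleus maps the word `w` to `w'`, then `w` and `w'` extend to
asymptotically equivalent sequences. -/
lemma exists_asymp_extension (h : IsContracting act sec N) {s : G} (hs : s ∈ N) {n : ℕ}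
    {w : List X} (hw : w.length = n) :
    ∃ y y', wordOf y n = w ∧ wordOf y' n = act s w ∧ Asymp act N y y' := by
  subst hw
  -- Chain of preimages under sections: `t 0 = s`, and `t i` is the section of `t (i + 1)` at
  -- `letter (t i)`.
  have : Nonempty X := let ⟨_, _, a, _⟩ := h.exists_section hs; ⟨a⟩
  choose! next hnext letter hletter using fun (t : G) (ht : t ∈ N) => h.exists_section ht
  let t : ℕ → G := fun i => next^[i] s
  have ht : ∀ i, t i ∈ N := by
    intro i
    induction i with
    | zero => exact hs
    | succ i ih => simpa only [t, Function.iterate_succ_apply'] using hnext _ ih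
  have ht1 : ∀ i, sec (t (i + 1)) [letter (t i)] = t i := by
    intro i
    have := hletter _ (ht i)
    simpa only [t, Function.iterate_succ_apply'] using this
  have hb : ∀ i, ∃ b, act (t (i + 1)) [letter (t i)] = [b] := fun i =>
    List.length_eq_one_iff.1 (by rw [h.len]; rfl)
  choose b hb using hb
  obtain ⟨y, hy, hya⟩ := exists_extension w (fun i => letter (t i))
  obtain ⟨y', hy', hyb⟩ := exists_extension (act s w) b
  rw [h.len] at hy' hyb
  have key : ∀ i, act (t i) (wordOf y (w.length + i)) = wordOf y' (w.length + i) := by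
    intro i
    induction i with
    | zero => rw [add_zero, hy, hy']; rfl
    | succ i ih =>
      rw [← add_assoc, wordOf_succ, wordOf_succ, hya, hyb]
      have := h.app (t (i + 1)) [letter (t i)] (wordOf y (w.length + i))
      rw [hb, ht1, ih] at this
      exact this
  refine ⟨y, y', hy, hy', asymp_iff.2 fun n => ?_⟩
  have := key n
  rw [add_comm] at this
  obtain ⟨p, -, h1, -⟩ := h.shift this
  exact ⟨_, h.sec_mem (ht n) p, h1⟩

/-! ### A finite group generated by the nucleus gives dimension zero -/

/-- Sequences whose words of length `n` lie in one orbit of the group generated by the nucleus. -/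
def OrbitCell (act : G → List X → List X) (N : Finset G) (n : ℕ) (x : ℕ → X) : Set (ℕ → X) :=
  {y | ∃ g ∈ Subgroup.closure (N : Set G), act g (wordOf x n) = wordOf y n}

lemma mem_orbitCell_self (h : IsContracting act sec N) (n : ℕ) (x : ℕ → X) :
    x ∈ OrbitCell act N n x := ⟨1, Subgroup.one_mem _, h.one _⟩

lemma orbitCell_symm (h : IsContracting act sec N) {n : ℕ} {x y : ℕ → X}
    (hy : y ∈ OrbitCell act N n x) : x ∈ OrbitCell act N n y := by
  obtain ⟨g, hg, hgx⟩ := hy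
  exact ⟨g⁻¹, Subgroup.inv_mem _ hg, by rw [← hgx, h.act_inv_act]⟩

lemma orbitCell_trans (h : IsContracting act sec N) {n : ℕ} {x y z : ℕ → X}
    (hy : y ∈ OrbitCell act N n x) (hz : z ∈ OrbitCell act N n y) :
    z ∈ OrbitCell act N n x := by
  obtain ⟨g, hg, hgx⟩ := hy
  obtain ⟨k, hk, hky⟩ := hz
  exact ⟨k * g, Subgroup.mul_mem _ hk hg, by rw [h.mul, hgx, hky]⟩

lemma orbitCell_eq (h : IsContracting act sec N) {n : ℕ} {x y : ℕ → X}
    (hy : y ∈ OrbitCell act N n x) : OrbitCell act N n y = OrbitCell act N n x :=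
  Set.Subset.antisymm (fun _ hz => h.orbitCell_trans hy hz)
    (fun _ hz => h.orbitCell_trans (h.orbitCell_symm hy) hz)

lemma orbitCell_anti (h : IsContracting act sec N) {n k : ℕ} (hk : k ≤ n) (x : ℕ → X) :
    OrbitCell act N n x ⊆ OrbitCell act N k x := by
  rintro y ⟨g, hg, hgx⟩
  obtain ⟨m, rfl⟩ := Nat.exists_eq_add_of_le hk
  obtain ⟨p, -, h1, -⟩ := h.shift hgx
  exact ⟨_, h.sec_mem_closure_nucleus hg p, h1⟩

lemma asymp_orbitCell {n : ℕ} {x y : ℕ → X} (hxy : Asymp act N x y) :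
    y ∈ OrbitCell act N n x := by
  obtain ⟨g, hg, hgx⟩ := asymp_iff.1 hxy n
  exact ⟨g, Subgroup.subset_closure hg, hgx⟩

lemma preimage_image_orbitCell (h : IsContracting act sec N) (n : ℕ) (x : ℕ → X) :
    Quot.mk (Asymp act N) ⁻¹' (Quot.mk (Asymp act N) '' OrbitCell act N n x) =
      OrbitCell act N n x := by
  refine Set.Subset.antisymm ?_ (Set.subset_preimage_image _ _)
  rintro y ⟨z, hz, hzy⟩
  exact h.orbitCell_trans hz (asymp_orbitCell (h.mk_eq_mk.1 hzy))

theorem covDim_of_finite [Finite X] [TopologicalSpace X] [DiscreteTopology X]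
    (h : IsContracting act sec N) (hfin : Finite (Subgroup.closure (N : Set G))) :
    CovDimLE (Quot (Asymp act N)) 0 := by
  intro 𝒰 hopen hcover
  let π : (ℕ → X) → Quot (Asymp act N) := Quot.mk _
  -- The cells around `x` shrink to the equivalence class of `x`, hence are eventually small.
  have hsmall : ∀ x, ∃ n, ∃ U ∈ 𝒰, π '' OrbitCell act N n x ⊆ U := by
    intro x
    obtain ⟨U, hU, hxU⟩ : ∃ U ∈ 𝒰, π x ∈ U := Set.mem_sUnion.1 (hcover ▸ Set.mem_univ (π x))
    have hπU : IsOpen (π ⁻¹' U) := (hopen U hU).preimage continuous_quot_mk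
    obtain ⟨n, hn⟩ := exists_subset_nhds_of_isCompact (V := fun n => OrbitCell act N n x)
      (directed_of_isDirected_le fun n m hnm => h.orbitCell_anti hnm x)
      (fun n => (isClosed_wordOf n (fun w => ∃ g ∈ Subgroup.closure (N : Set G),
        act g (wordOf x n) = w)).isCompact) (U := π ⁻¹' U) (by
        intro y hy
        have hxy : Asymp act N x y :=
          h.asymp_of_finite (F := (Subgroup.closure (N : Set G) : Set G)) (Set.toFinite _)
            fun n => Set.mem_iInter.1 hy n
        refine hπU.mem_nhds ?_
        have : π x = π y := h.mk_eq_mk.2 hxy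
        rwa [Set.mem_preimage, ← this])
    exact ⟨n, U, hU, Set.image_subset_iff.2 hn⟩
  -- Around each point take the largest cell subordinate to the cover; these are disjoint or equal.
  refine ⟨{V | ∃ x n, V = π '' OrbitCell act N n x ∧
      IsLeast {n | ∃ U ∈ 𝒰, π '' OrbitCell act N n x ⊆ U} n}, ?_, ?_, ?_, ?_⟩
  · rintro _ ⟨x, n, rfl, -⟩
    rw [← isQuotientMap_quot_mk.isOpen_preimage, h.preimage_image_orbitCell]
    exact isOpen_wordOf n (fun w => ∃ g ∈ Subgroup.closure (N : Set G),
      act g (wordOf x n) = w)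
  · refine Set.eq_univ_of_forall fun y => ?_
    obtain ⟨x, rfl⟩ := Quot.exists_rep y
    classical
    exact ⟨_, ⟨x, Nat.find (hsmall x), rfl, Nat.find_spec (hsmall x),
      fun m hm => Nat.find_min' _ hm⟩, x, h.mem_orbitCell_self _ x, rfl⟩
  · rintro _ ⟨x, n, rfl, hn, -⟩
    exact hn
  · intro y
    obtain ⟨z, rfl⟩ := Quot.exists_rep y
    have huniq : ∀ V ∈ {V | V ∈ {V | ∃ x n, V = π '' OrbitCell act N n x ∧
        IsLeast {n | ∃ U ∈ 𝒰, π '' OrbitCell act N n x ⊆ U} n} ∧ Quot.mk _ z ∈ V},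
        ∃ n, V = π '' OrbitCell act N n z ∧
          IsLeast {n | ∃ U ∈ 𝒰, π '' OrbitCell act N n z ⊆ U} n := by
      rintro _ ⟨⟨x, n, rfl, hn, hmin⟩, hz⟩
      have hzx : z ∈ OrbitCell act N n x := by
        rw [← h.preimage_image_orbitCell]; exact hz
      have heq := h.orbitCell_eq hzx
      refine ⟨n, by rw [heq], by simpa only [Set.mem_ofPred_eq, heq] using hn, fun m hm => ?_⟩
      by_contra! hlt
      have hmx := h.orbitCell_eq (h.orbitCell_anti hlt.le x hzx)
      exact absurd (hmin (by simpa only [Set.mem_ofPred_eq, hmx] using hm)) (by omega)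
    have hsub : {V | V ∈ {V | ∃ x n, V = π '' OrbitCell act N n x ∧
        IsLeast {n | ∃ U ∈ 𝒰, π '' OrbitCell act N n x ⊆ U} n} ∧
          Quot.mk _ z ∈ V}.Subsingleton := by
      intro V hV V' hV'
      obtain ⟨n, rfl, hn⟩ := huniq V hV
      obtain ⟨m, rfl, hm⟩ := huniq V' hV'
      rw [hn.unique hm]
    exact ⟨hsub.finite, (Set.ncard_le_one hsub.finite).2 fun _ hV _ hV' => hsub hV hV'⟩

/-! ### Dimension zero gives a finite group generated by the nucleus -/

/-- For every `k`, the point of the limit space represented by `x` has a neighbourhood whose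
representatives all agree, in their last `k` letters, with some representative of that point. -/
lemma exists_nhd [Finite X] [TopologicalSpace X] [DiscreteTopology X]
    (h : IsContracting act sec N) (x : ℕ → X) (k : ℕ) :
    ∃ U : Set (Quot (Asymp act N)), IsOpen U ∧ Quot.mk _ x ∈ U ∧
      ∀ y, Quot.mk _ y ∈ U → ∃ z, Asymp act N x z ∧ wordOf z k = wordOf y k := by
  let F : Set (ℕ → X) := {y | ¬ ∃ z, Asymp act N x z ∧ wordOf z k = wordOf y k}
  have hF : IsClosed F := isClosed_wordOf k fun w => ¬ ∃ z, Asymp act N x z ∧ wordOf z k = w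
  -- The saturation of `F` is closed, as the projection of a compact set.
  have hsat : IsClosed {y | ∃ y' ∈ F, Asymp act N y' y} := by
    have hc : IsCompact ({p : (ℕ → X) × (ℕ → X) | Asymp act N p.1 p.2} ∩ Prod.fst ⁻¹' F) :=
      (isClosed_asymp.inter (hF.preimage continuous_fst)).isCompact
    have := (hc.image continuous_snd).isClosed
    convert this using 1
    ext y
    constructor
    · rintro ⟨y', hy', hyy⟩
      exact ⟨(y', y), ⟨hyy, hy'⟩, rfl⟩
    · rintro ⟨⟨y', y''⟩, ⟨h1, h2⟩, rfl⟩
      exact ⟨y', h2, h1⟩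
  have hpre : Quot.mk (Asymp act N) ⁻¹' (Quot.mk (Asymp act N) '' F)ᶜ =
      {y | ∃ y' ∈ F, Asymp act N y' y}ᶜ := by
    ext y
    simp only [Set.mem_preimage, Set.mem_compl_iff, Set.mem_image, h.mk_eq_mk, Set.mem_ofPred_eq]
  refine ⟨(Quot.mk _ '' F)ᶜ, ?_, ?_, ?_⟩
  · rw [← isQuotientMap_quot_mk.isOpen_preimage, hpre]
    exact hsat.isOpen_compl
  · rintro ⟨y, hy, hyx⟩
    exact hy ⟨y, h.equivalence_asymp.symm (h.mk_eq_mk.1 hyx), rfl⟩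
  · intro y hy
    by_contra hcon
    exact hy ⟨y, hcon, rfl⟩

theorem finite_of_covDim [Finite X] [TopologicalSpace X] [DiscreteTopology X]
    (h : IsContracting act sec N) (hdim : CovDimLE (Quot (Asymp act N)) 0) :
    Finite (Subgroup.closure (N : Set G)) := by
  rcases isEmpty_or_nonempty X with hX | hX
  · have : Subsingleton G := ⟨fun g k => h.ext fun v => by
      rw [Subsingleton.elim (act g v) (act k v)]⟩
    infer_instance
  let π : (ℕ → X) → Quot (Asymp act N) := Quot.mk _
  choose k hk using h.exists_level
  choose U hUo hxU hU using fun x => h.exists_nhd x (k x)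
  obtain ⟨𝒱, hVo, hVc, hVU, hV1⟩ := hdim (Set.range U)
    (by rintro _ ⟨x, rfl⟩; exact hUo x)
    (Set.eq_univ_of_forall fun y => by
      obtain ⟨x, rfl⟩ := Quot.exists_rep y
      exact ⟨U x, ⟨x, rfl⟩, hxU x⟩)
  have huniq : ∀ y, ∀ V ∈ 𝒱, ∀ V' ∈ 𝒱, y ∈ V → y ∈ V' → V = V' := fun y V hV V' hV' hy hy' =>
    (Set.ncard_le_one (hV1 y).1).1 (hV1 y).2 V ⟨hV, hy⟩ V' ⟨hV', hy'⟩
  -- A level `n` at which every cylinder lies over a single piece `V`, fine enough for that piece.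
  let O : ℕ → Set (ℕ → X) := fun n => {y | ∃ x, k x ≤ n ∧ ∃ V ∈ 𝒱, V ⊆ U x ∧
    ∀ y', wordOf y' n = wordOf y n → π y' ∈ V}
  obtain ⟨n, hn⟩ : ∃ n, Set.univ ⊆ O n := by
    refine isCompact_univ.elim_directed_cover O (fun n => ?_) (fun y _ => ?_)
      (directed_of_isDirected_le fun n m hnm => ?_)
    · exact isOpen_wordOf n fun w => ∃ x, k x ≤ n ∧ ∃ V ∈ 𝒱, V ⊆ U x ∧
        ∀ y', wordOf y' n = w → π y' ∈ V
    · obtain ⟨V, hV, hyV⟩ := Set.mem_sUnion.1 (hVc ▸ Set.mem_univ (π y))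
      obtain ⟨_, ⟨x, rfl⟩, hVx⟩ := hVU V hV
      obtain ⟨m, hm⟩ := exists_cylinder_subset ((hVo V hV).preimage continuous_quot_mk) hyV
      exact Set.mem_iUnion.2 ⟨max m (k x), x, le_max_right _ _, V, hV, hVx, fun y' hy' =>
        hm y' (wordOf_eq_of_le (le_max_left _ _) hy')⟩
    · rintro y ⟨x, hkx, V, hV, hVx, hy⟩
      exact ⟨x, hkx.trans hnm, V, hV, hVx, fun y' hy' => hy y' (wordOf_eq_of_le hnm hy')⟩
  refine h.finite_of_sec_mem (Subgroup.closure (N : Set G) : Set G) N N.finite_toSet n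
    fun g hg v hv => ?_
  obtain ⟨y₀, hy₀, -⟩ := exists_extension v fun _ => Classical.arbitrary X
  rw [hv] at hy₀
  obtain ⟨x, hkx, V, hV, hVx, hcyl⟩ := hn (Set.mem_univ y₀)
  obtain ⟨z₀, hz₀, hzy₀⟩ := hU x y₀ (hVx (hcyl y₀ rfl))
  -- Along the orbit of `v` the piece `V` never changes, and the germ at `z₀` is tracked exactly.
  have step : ∀ s ∈ N, ∀ g, (∃ y z, wordOf y n = act g v ∧ π y ∈ V ∧ Asymp act N x z ∧
        wordOf z (k x) = wordOf y (k x) ∧ Germ act sec N (sec g v) z₀ z) →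
      ∃ y z, wordOf y n = act (s * g) v ∧ π y ∈ V ∧ Asymp act N x z ∧
        wordOf z (k x) = wordOf y (k x) ∧ Germ act sec N (sec (s * g) v) z₀ z := by
    rintro s hs g ⟨y, z, hy, hyV, hxz, hzy, hgerm⟩
    have hlen : (act g v).length = n := (h.len g v).trans hv
    obtain ⟨y₁, y₂, hy₁, hy₂, hasymp⟩ := h.exists_asymp_extension hs hlen
    obtain ⟨-, -, V', hV', -, hV'y⟩ := hn (Set.mem_univ y)
    obtain rfl := huniq _ V hV V' hV' hyV (hV'y y rfl)
    have hy₁V : π y₁ ∈ V := hV'y y₁ (hy₁.trans hy.symm)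
    have hy₂V : π y₂ ∈ V := by
      have : π y₁ = π y₂ := h.mk_eq_mk.2 hasymp
      rwa [← this]
    obtain ⟨z', hxz', hzy'⟩ := hU x y₂ (hVx hy₂V)
    refine ⟨y₂, z', by rw [hy₂, h.mul], hy₂V, hxz', hzy', ?_⟩
    rw [h.sec_mul]
    refine h.germ_comp hgerm (hk x z z' _ hxz hxz' ?_)
    rw [hzy, hzy']
    refine GermAt.mono h hkx ⟨s, hs, ?_, ?_⟩
    · rw [hy, hy₂]
    · rw [hy]
  have main : ∃ y z, wordOf y n = act g v ∧ π y ∈ V ∧ Asymp act N x z ∧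
      wordOf z (k x) = wordOf y (k x) ∧ Germ act sec N (sec g v) z₀ z := by
    induction hg using Subgroup.closure_induction_left with
    | one =>
      exact ⟨y₀, z₀, by rw [hy₀, h.one], hcyl y₀ rfl, hz₀, hzy₀, by
        rw [h.sec_one]; exact h.germ_one z₀⟩
    | mul_left s hs g _ ih => exact step s hs g ih
    | inv_mul_cancel s hs g _ ih => exact step s⁻¹ (h.inv_mem hs) g ih
  obtain ⟨_, _, _, _, _, _, hgerm⟩ := main
  exact Germ.mem h hgerm

end IsContracting

/-- Let `(G, X)` be a faithful contracting self-similar group with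
nucleus `N`. The limit space `J_G` (the quotient of `X^{-ω}` by the asymptotic
equivalence relation defined via the nucleus) is zero-dimensional if and only if the
subgroup of `G` generated by the nucleus is finite, and this is further equivalent to
`G` being locally finite (every finitely generated subgroup of `G` is finite). -/
theorem limit_space_zero_dim_iff {G X : Type*} [Group G] [Fintype X]
    [TopologicalSpace X] [DiscreteTopology X]
    (act : G → List X → List X) (sec : G → List X → G)
    (h_one : ∀ v, act 1 v = v)
    (h_mul : ∀ g h : G, ∀ v, act (g * h) v = act g (act h v))
    (h_faithful : ∀ g : G, (∀ v, act g v = v) → g = 1)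
    (h_len : ∀ g v, (act g v).length = v.length)
    (h_sec : ∀ g v w, act g (v ++ w) = act g v ++ act (sec g v) w)
    (N : Finset G)
    (h_contr : ∀ g : G, ∃ n : ℕ, ∀ v : List X, n ≤ v.length → sec g v ∈ N)
    (h_min : ∀ N' : Finset G,
      (∀ g : G, ∃ n : ℕ, ∀ v : List X, n ≤ v.length → sec g v ∈ N') → N ⊆ N') :
    -- the limit space: quotient of `X^{-ω}` by asymptotic equivalence
    (CovDimLE
        (Quot fun x y : ℕ → X => ∃ g : ℕ → G, (∀ n, g n ∈ N) ∧
          ∀ n, act (g n) (wordOf x n) = wordOf y n) 0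
      ↔ Finite (Subgroup.closure (N : Set G))) ∧
    (CovDimLE
        (Quot fun x y : ℕ → X => ∃ g : ℕ → G, (∀ n, g n ∈ N) ∧
          ∀ n, act (g n) (wordOf x n) = wordOf y n) 0
      ↔ ∀ S : Finset G, Finite (Subgroup.closure (S : Set G))) := by
  have h : IsContracting act sec N :=
    ⟨h_one, h_mul, h_faithful, h_len, h_sec, h_contr, h_min⟩
  have hiff : CovDimLE (Quot (Asymp act N)) 0 ↔ Finite (Subgroup.closure (N : Set G)) :=
    ⟨h.finite_of_covDim, h.covDim_of_finite⟩
  exact ⟨hiff, fun hdim => h.locally_finite (hiff.1 hdim), fun hloc => hiff.2 (hloc N)⟩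
end

section
/- In the self-similar group acting on {0,1,2}* generated by a = (012) (the 3-cycle with trivial sections) and b = (a, a⁻¹, b), viewed as a wreath recursion over the free product ⟨a⟩ * ⟨b⟩ ≅ (ℤ/3ℤ) * (ℤ/3ℤ) (so a³ = b³ = 1), the recursion is contracting: the sections of ab, a⁻¹b, and ab⁻¹ at one-letter words all belong to {1, a, a⁻¹, b, b⁻¹}. -/
/-!
The set `S = {1, a, a⁻¹, b, b⁻¹}` is closed under inverses and sections, and one-letter sections of
a product of two elements of `S` lie again in `S`: powers of `a` have trivial sections, so a factor
that is a power of `a` disappears from the section, while a product of two powers of `b` is a power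
of `b`, because `b³ = 1` (`gupta_sidki_recursion_contracting` establishes these facts).

Hence the elements whose sections at all long words lie in `S` form a subgroup
(`exists_forall_secW_mem`): at a long word, the section of `g * h` is a product of two elements
of `S`, and one further letter brings it into `S`. This subgroup contains the generators, so it is
all of `G`, and `S` is a finite set absorbing all sections.
-/

/-- Extension of the section maps from letters to words:
`g|_{x v} = (g|_x)|_v`. -/
def secW {G X : Type*} (s : G → X → G) : G → List X → G
  | g, [] => g
  | g, x :: v => secW s (s g x) v

theorem secW_append {G X : Type*} (s : G → X → G) (g : G) (u w : List X) :
    secW s g (u ++ w) = secW s (secW s g u) w := by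
  induction u generalizing g with
  | nil => rfl
  | cons x u ih => exact ih (s g x)

theorem secW_mem {G X : Type*} {s : G → X → G} {S : Set G}
    (hS : ∀ g ∈ S, ∀ x, s g x ∈ S) {g : G} (hg : g ∈ S) (v : List X) : secW s g v ∈ S := by
  induction v generalizing g with
  | nil => exact hg
  | cons x v ih => exact ih (hS g hg x)

/-- The cocycle rule on words; `w` is the image of `v` under the action of `h`, of which only
the length is recorded. -/
theorem exists_secW_mul {G X : Type*} [Group G] {ρ : G → Equiv.Perm X} {s : G → X → G}
    (hs_mul : ∀ g h x, s (g * h) x = s g (ρ h x) * s h x) (g h : G) (v : List X) :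
    ∃ w : List X, w.length = v.length ∧ secW s (g * h) v = secW s g w * secW s h v := by
  induction v generalizing g h with
  | nil => exact ⟨[], rfl, rfl⟩
  | cons x v ih =>
    obtain ⟨w, hw, e⟩ := ih (s g (ρ h x)) (s h x)
    refine ⟨ρ h x :: w, by simp [hw], ?_⟩
    simp only [secW, hs_mul, e]

theorem secW_one {G X : Type*} [Group G] {s : G → X → G} (hs_one : ∀ x, s 1 x = 1)
    (v : List X) : secW s 1 v = 1 := by
  induction v with
  | nil => rfl
  | cons x v ih => simpa only [secW, hs_one] using ih

/-- A set `S` absorbs all sections at long words as soon as it contains a generating set, is closed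
under inverses, and contains the one-letter sections of its elements and of their pairwise
products. -/
theorem exists_forall_secW_mem {G X : Type*} [Group G] {ρ : G → Equiv.Perm X} {s : G → X → G}
    (hs_one : ∀ x, s 1 x = 1)
    (hs_mul : ∀ g h x, s (g * h) x = s g (ρ h x) * s h x)
    {S T : Set G} (hT : Subgroup.closure T = ⊤) (hTS : T ⊆ S) (h1 : (1 : G) ∈ S)
    (hinv : ∀ g ∈ S, g⁻¹ ∈ S) (hsec : ∀ g ∈ S, ∀ x, s g x ∈ S)
    (hmul : ∀ g ∈ S, ∀ h ∈ S, ∀ x, s (g * h) x ∈ S) (g : G) :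
    ∃ n : ℕ, ∀ v : List X, n ≤ v.length → secW s g v ∈ S := by
  have hg : g ∈ Subgroup.closure T := hT ▸ Subgroup.mem_top g
  induction hg using Subgroup.closure_induction with
  | mem x hx => exact ⟨0, fun v _ => secW_mem hsec (hTS hx) v⟩
  | one => exact ⟨0, fun v _ => secW_mem hsec h1 v⟩
  | mul g h _ _ ihg ihh =>
    obtain ⟨m, hm⟩ := ihg
    obtain ⟨n, hn⟩ := ihh
    refine ⟨max m n + 1, fun v hv => ?_⟩
    have hlen : (v.take (max m n)).length = max m n := by
      rw [List.length_take]; omega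
    rw [← List.take_append_drop (max m n) v, secW_append]
    obtain ⟨w, hw, e⟩ := exists_secW_mul hs_mul g h (v.take (max m n))
    rw [e]
    have hdrop : (v.drop (max m n)).length ≠ 0 := by
      rw [List.length_drop]; omega
    cases hd : v.drop (max m n) with
    | nil => simp [hd] at hdrop
    | cons x u =>
      exact secW_mem hsec (hmul _ (hm w (by omega)) _ (hn _ (by omega)) x) u
  | inv g _ ih =>
    obtain ⟨n, hn⟩ := ih
    refine ⟨n, fun v hv => ?_⟩
    obtain ⟨w, hw, e⟩ := exists_secW_mul hs_mul g g⁻¹ v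
    rw [mul_inv_cancel, secW_one hs_one] at e
    rw [eq_inv_of_mul_eq_one_right e.symm]
    exact hinv _ (hn w (by omega))

/-- The Gupta–Sidki recursion `a = (012)` (trivial sections),
`b = (a, a⁻¹, b)`, viewed over the free product `⟨a⟩ * ⟨b⟩ ≅ (ℤ/3) * (ℤ/3)`
(a group generated by `a, b` with `a³ = b³ = 1`), is contracting; in particular the
sections of `ab`, `a⁻¹b`, and `ab⁻¹` at one-letter words all belong to
`{1, a, a⁻¹, b, b⁻¹}`. -/
theorem gupta_sidki_recursion_contracting {G : Type*} [Group G] (a b : G)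
    (ha3 : a ^ 3 = 1) (hb3 : b ^ 3 = 1)
    (hgen : Subgroup.closure ({a, b} : Set G) = ⊤)
    (ρ : G → Equiv.Perm (Fin 3)) (s : G → Fin 3 → G)
    (hρ_one : ρ 1 = 1)
    (hρ_mul : ∀ g h, ρ (g * h) = ρ g * ρ h)
    (hs_one : ∀ x, s 1 x = 1)
    (hs_mul : ∀ g h x, s (g * h) x = s g (ρ h x) * s h x)
    (hρa : ρ a = finRotate 3) (hsa : ∀ i, s a i = 1)
    (hρb : ρ b = 1) (hsb0 : s b 0 = a) (hsb1 : s b 1 = a⁻¹) (hsb2 : s b 2 = b) :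
    (∀ i : Fin 3,
      s (a * b) i ∈ ({1, a, a⁻¹, b, b⁻¹} : Set G) ∧
      s (a⁻¹ * b) i ∈ ({1, a, a⁻¹, b, b⁻¹} : Set G) ∧
      s (a * b⁻¹) i ∈ ({1, a, a⁻¹, b, b⁻¹} : Set G)) ∧
    (∃ N : Finset G, ∀ g : G, ∃ n : ℕ, ∀ v : List (Fin 3), n ≤ v.length →
      secW s g v ∈ N) := by
  have hsai : ∀ i, s a⁻¹ i = 1 := by
    intro i
    have h := hs_mul a a⁻¹ i
    rw [mul_inv_cancel, hs_one, hsa, one_mul] at h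
    exact h.symm
  have hρbi : ρ b⁻¹ = 1 := by
    have h := hρ_mul b b⁻¹
    rw [mul_inv_cancel, hρ_one, hρb, one_mul] at h
    exact h.symm
  have hsbi : ∀ i, s b⁻¹ i = (s b i)⁻¹ := by
    intro i
    have h := hs_mul b b⁻¹ i
    rw [mul_inv_cancel, hs_one, hρbi, Equiv.Perm.one_apply] at h
    exact eq_inv_of_mul_eq_one_right h.symm
  set S : Set G := {1, a, a⁻¹, b, b⁻¹} with hS
  have hinv : ∀ g ∈ S, g⁻¹ ∈ S := by
    rintro g (rfl | rfl | rfl | rfl | rfl) <;> simp [hS]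
  have hsb : ∀ i, s b i ∈ S := by
    intro i
    fin_cases i <;> simp [hS, hsb0, hsb1, hsb2]
  have hsec : ∀ g ∈ S, ∀ i, s g i ∈ S := by
    rintro g (rfl | rfl | rfl | rfl | rfl) i
    · simp [hS, hs_one]
    · simp [hS, hsa]
    · simp [hS, hsai]
    · exact hsb i
    · rw [hsbi]
      exact hinv _ (hsb i)
  -- Elements of `S` are powers of `a`, which have trivial sections, or nontrivial powers of `b`.
  have hcases : ∀ g ∈ S, (∀ i, s g i = 1) ∨ g = b ∨ g = b⁻¹ := by
    rintro g (rfl | rfl | rfl | rfl | rfl)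
    · exact Or.inl hs_one
    · exact Or.inl hsa
    · exact Or.inl hsai
    · exact Or.inr (Or.inl rfl)
    · exact Or.inr (Or.inr rfl)
  have hbb : b * b = b⁻¹ := eq_inv_of_mul_eq_one_left (by rw [← hb3, pow_succ, pow_two])
  have hbbi : b⁻¹ * b⁻¹ = b := by rw [← mul_inv_rev, hbb, inv_inv]
  have hmul : ∀ g ∈ S, ∀ h ∈ S, ∀ i, s (g * h) i ∈ S := by
    intro g hg h hh i
    rcases hcases g hg with h1 | hgb
    · rw [hs_mul, h1, one_mul]
      exact hsec h hh i
    rcases hcases h hh with h1 | hhb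
    · rw [hs_mul, h1 i, mul_one]
      exact hsec g hg _
    refine hsec _ ?_ i
    rcases hgb with rfl | rfl <;> rcases hhb with rfl | rfl <;> simp [hS, hbb, hbbi]
  have h1 : (1 : G) ∈ S := by simp [hS]
  have hA : a ∈ S := by simp [hS]
  have hB : b ∈ S := by simp [hS]
  refine ⟨fun i => ⟨hmul _ hA _ hB i, hmul _ (hinv _ hA) _ hB i, hmul _ hA _ (hinv _ hB) i⟩, ?_⟩
  have hfin : S.Finite := Set.toFinite _
  refine ⟨hfin.toFinset, fun g => ?_⟩
  simp only [Set.Finite.mem_toFinset]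
  refine exists_forall_secW_mem hs_one hs_mul hgen ?_ h1 hinv hsec hmul g
  rintro x (rfl | rfl)
  exacts [hA, hB]
end
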